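/- arXiv:1004.0425 — 2 statements merged into one kernel-verified Lean document; each statement's English description precedes it below -/
import Mathlib

section
/- Let U = [[a,b],[c,d]] be a unitary 2×2 matrix, let κ₂ ∈ ℝ, and let w_t = κ₂ t + w₀. Set U_t = [[a, b e^{i w_t}], [c e^{−i w_t}, d]] and R(k) = diag(e^{ik}, e^{−ik}). Then U_t = R(w_t/2) U R(−w_t/2), and for every t ≥ 1 and every k, (R(k)U_{t−1})(R(k)U_{t−2})···(R(k)U₀) = R(w_t/2) · (R(k − κ₂/2) U)^t · R(−w₀/2); in particular, the Fourier transform of the corresponding walk satisfies Ψ̂_t(k) = R(w_t/2) (R(k − κ₂/2) U)^t R(−w₀/2) Ψ̂₀(k). -/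
open MeasureTheory Complex Filter

noncomputable section

/-- The Konno density function `f_K(x; a)`; only `|a|` matters. -/
def konnoDensity (a x : ℝ) : ℝ :=
  if |x| < |a| then
    Real.sqrt (1 - |a| ^ 2) / (Real.pi * (1 - x ^ 2) * Real.sqrt (|a| ^ 2 - x ^ 2))
  else 0

/-- Time evolution of a time-dependent discrete-time quantum walk on `ℤ`:
`ψ_{t+1}(x) = P_t ψ_t(x+1) + Q_t ψ_t(x-1)`, where `P_t`/`Q_t` are the top/bottom
row parts of the coin `U t`. -/
def QWEvolves (U : ℕ → Matrix (Fin 2) (Fin 2) ℂ) (ψ : ℕ → ℤ → Fin 2 → ℂ) : Prop :=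
  ∀ t : ℕ, ∀ x : ℤ,
    ψ (t + 1) x 0 = U t 0 0 * ψ t (x + 1) 0 + U t 0 1 * ψ t (x + 1) 1 ∧
    ψ (t + 1) x 1 = U t 1 0 * ψ t (x - 1) 0 + U t 1 1 * ψ t (x - 1) 1

/-- Initial state `ψ₀(0) = ᵀ(α, β)`, `ψ₀(x) = 0` for `x ≠ 0`. -/
def QWInit (α β : ℂ) (ψ : ℕ → ℤ → Fin 2 → ℂ) : Prop :=
  ψ 0 0 0 = α ∧ ψ 0 0 1 = β ∧ ∀ x : ℤ, x ≠ 0 → (ψ 0 x 0 = 0 ∧ ψ 0 x 1 = 0)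

/-- `P(X_t = x) = ‖ψ_t(x)‖²`. -/
def qwProb (ψ : ℕ → ℤ → Fin 2 → ℂ) (t : ℕ) (x : ℤ) : ℝ :=
  Complex.normSq (ψ t x 0) + Complex.normSq (ψ t x 1)

/-- The law of `X_t / t`: `μ_t = Σ_{x ∈ ℤ} P(X_t = x) δ_{x/t}`. -/
def qwMeasure (ψ : ℕ → ℤ → Fin 2 → ℂ) (t : ℕ) : Measure ℝ :=
  Measure.sum fun x : ℤ => ENNReal.ofReal (qwProb ψ t x) • Measure.dirac ((x : ℝ) / (t : ℝ))

/-- Weak convergence of `X_t / t` to the law with density `f`. -/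
def qwWeakLimit (ψ : ℕ → ℤ → Fin 2 → ℂ) (f : ℝ → ℝ) : Prop :=
  ∀ g : BoundedContinuousFunction ℝ ℝ,
    Tendsto (fun t : ℕ => ∫ y, g y ∂ qwMeasure ψ t) atTop (nhds (∫ y, g y * f y))

/-- `R(k) = diag(e^{ik}, e^{-ik})`. -/
def Rmat (k : ℝ) : Matrix (Fin 2) (Fin 2) ℂ :=
  !![Complex.exp (Complex.I * k), 0; 0, Complex.exp (-(Complex.I * k))]

/-- Ordered product `A_{t-1} ⬝ A_{t-2} ⬝ ⋯ ⬝ A₀` of a sequence of matrices. -/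
def coinProd (A : ℕ → Matrix (Fin 2) (Fin 2) ℂ) : ℕ → Matrix (Fin 2) (Fin 2) ℂ
  | 0 => 1
  | t + 1 => A t * coinProd A t

/-!
A phase `w` in the off-diagonal entries of the coin is a conjugation by `R(w/2)`, so the one-step
evolution is a gauge transform of the walk with coin `U`: since `R` is a homomorphism, its factors
commute with `R(k)`, and in the ordered product neighbouring factors cancel up to the increment
`w_{s+1} - w_s`, which shifts `k`. For linear `w` the shift is the same at every step.
-/

theorem Rmat_zero : Rmat 0 = 1 := by
  simp [Rmat, Matrix.one_fin_two]

theorem Rmat_add (k l : ℝ) : Rmat (k + l) = Rmat k * Rmat l := by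
  simp [Rmat, ← Complex.exp_add, mul_add, add_comm]

theorem Rmat_neg_mul_Rmat (k : ℝ) : Rmat (-k) * Rmat k = 1 := by
  rw [← Rmat_add, neg_add_cancel, Rmat_zero]

theorem Rmat_mul_mul_Rmat (a b c d : ℂ) (k l : ℝ) :
    Rmat k * !![a, b; c, d] * Rmat l =
      !![a * exp (I * (k + l)), b * exp (I * (k - l));
         c * exp (-(I * (k - l))), d * exp (-(I * (k + l)))] := by
  have hadd : I * (k + l) = I * k + I * l := mul_add ..
  have hsub : I * (k - l) = I * k + -(I * l) := by ring
  simp only [Rmat, Matrix.mul_fin_two, hadd, hsub, neg_add, neg_neg, Complex.exp_add,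
    mul_zero, zero_mul, add_zero, zero_add]
  congr! 3 <;> ring_nf

theorem Rmat_half_conj (a b c d : ℂ) (θ : ℝ) :
    Rmat (θ / 2) * !![a, b; c, d] * Rmat (-θ / 2) =
      !![a, b * exp (I * θ); c * exp (-(I * θ)), d] := by
  simp [Rmat_mul_mul_Rmat, neg_div]

theorem coinProd_const (B : Matrix (Fin 2) (Fin 2) ℂ) (t : ℕ) :
    coinProd (fun _ => B) t = B ^ t := by
  induction t with
  | zero => rw [coinProd, pow_zero]
  | succ t ih => rw [coinProd, ih, pow_succ']

theorem coinProd_gauge (B G H : ℕ → Matrix (Fin 2) (Fin 2) ℂ) (hHG : ∀ t, H t * G t = 1) (t : ℕ) :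
    coinProd (fun s => G (s + 1) * B s * H s) t = G t * coinProd B t * H 0 := by
  induction t with
  | zero => rw [coinProd, coinProd, mul_one, mul_eq_one_comm.mp (hHG 0)]
  | succ t ih =>
    calc
      _ = G (t + 1) * B t * H t * (G t * coinProd B t * H 0) := by rw [coinProd, ih]
      _ = G (t + 1) * B t * (H t * G t) * coinProd B t * H 0 := by simp only [mul_assoc]
      _ = G (t + 1) * coinProd B (t + 1) * H 0 := by
        rw [hHG, mul_one, coinProd, mul_assoc (G (t + 1))]

theorem eq_coinProd_mulVec (A : ℕ → Matrix (Fin 2) (Fin 2) ℂ) (v : ℕ → Fin 2 → ℂ)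
    (hv : ∀ t, v (t + 1) = (A t).mulVec (v t)) (t : ℕ) :
    v t = (coinProd A t).mulVec (v 0) := by
  induction t with
  | zero => rw [coinProd, Matrix.one_mulVec]
  | succ t ih => rw [hv, ih, coinProd, Matrix.mulVec_mulVec]

theorem coinProd_Rmat_half_conj (U : ℕ → Matrix (Fin 2) (Fin 2) ℂ) (k : ℝ) (w : ℕ → ℝ) (t : ℕ) :
    coinProd (fun s => Rmat k * (Rmat (w s / 2) * U s * Rmat (-(w s) / 2))) t =
      Rmat (w t / 2) * coinProd (fun s => Rmat (k - (w (s + 1) - w s) / 2) * U s) t *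
        Rmat (-(w 0) / 2) := by
  have hshift (s : ℕ) : Rmat k * Rmat (w s / 2) =
      Rmat (w (s + 1) / 2) * Rmat (k - (w (s + 1) - w s) / 2) := by
    rw [← Rmat_add, ← Rmat_add]
    congr 1
    ring
  have hinv (s : ℕ) : Rmat (-(w s) / 2) * Rmat (w s / 2) = 1 := by
    rw [neg_div, Rmat_neg_mul_Rmat]
  rw [← coinProd_gauge _ (fun s => Rmat (w s / 2)) (fun s => Rmat (-(w s) / 2)) hinv]
  simp only [← mul_assoc, hshift]

theorem case2_QW_fourier_product_general
    (a b c d : ℂ) (U : Matrix (Fin 2) (Fin 2) ℂ) (hU : U = !![a, b; c, d])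
    (κ₂ w₀ : ℝ) (w : ℕ → ℝ) (hw : ∀ t : ℕ, w t = κ₂ * t + w₀)
    (Useq : ℕ → Matrix (Fin 2) (Fin 2) ℂ)
    (hUseq : ∀ t : ℕ, Useq t =
      !![a, b * Complex.exp (Complex.I * (w t));
         c * Complex.exp (-(Complex.I * (w t))), d])
    (k : ℝ) :
    (∀ t : ℕ, Useq t = Rmat (w t / 2) * U * Rmat (-(w t) / 2)) ∧
    (∀ t : ℕ,
        coinProd (fun s => Rmat k * Useq s) t =
          Rmat (w t / 2) * (Rmat (k - κ₂ / 2) * U) ^ t * Rmat (-(w 0) / 2)) ∧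
    (∀ Ψhat : ℕ → Fin 2 → ℂ,
        (∀ t : ℕ, Ψhat (t + 1) = (Rmat k * Useq t).mulVec (Ψhat t)) →
        ∀ t : ℕ,
          Ψhat t =
            (Rmat (w t / 2) * (Rmat (k - κ₂ / 2) * U) ^ t * Rmat (-(w 0) / 2)).mulVec
              (Ψhat 0)) := by
  have hconj (t : ℕ) : Useq t = Rmat (w t / 2) * U * Rmat (-(w t) / 2) := by
    rw [hUseq, hU, Rmat_half_conj]
  have hincr (t : ℕ) : w (t + 1) - w t = κ₂ := by
    rw [hw, hw]
    push_cast
    ring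
  have hprod (t : ℕ) : coinProd (fun s => Rmat k * Useq s) t =
      Rmat (w t / 2) * (Rmat (k - κ₂ / 2) * U) ^ t * Rmat (-(w 0) / 2) := by
    simp only [hconj, coinProd_Rmat_half_conj, hincr, coinProd_const]
  refine ⟨hconj, hprod, fun Ψhat hΨ t => ?_⟩
  rw [← hprod]
  exact eq_coinProd_mulVec _ Ψhat hΨ t

/-- For the Case-2 coin `U_t = [[a, b e^{iw_t}], [c e^{-iw_t}, d]]` with
`w_t = κ₂ t + w₀`: `U_t = R(w_t/2) U R(-w_t/2)`, and
`(R(k)U_{t-1})⋯(R(k)U₀) = R(w_t/2) (R(k-κ₂/2) U)^t R(-w₀/2)` for `t ≥ 1`; in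
particular `Ψ̂_t(k) = R(w_t/2) (R(k-κ₂/2) U)^t R(-w₀/2) Ψ̂₀(k)`. -/
theorem case2_QW_fourier_product
    (a b c d : ℂ) (U : Matrix (Fin 2) (Fin 2) ℂ) (hU : U = !![a, b; c, d])
    (hunit : Matrix.conjTranspose U * U = 1)
    (κ₂ w₀ : ℝ) (w : ℕ → ℝ) (hw : ∀ t : ℕ, w t = κ₂ * t + w₀)
    (Useq : ℕ → Matrix (Fin 2) (Fin 2) ℂ)
    (hUseq : ∀ t : ℕ, Useq t =
      !![a, b * Complex.exp (Complex.I * (w t));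
         c * Complex.exp (-(Complex.I * (w t))), d])
    (k : ℝ) :
    (∀ t : ℕ, Useq t = Rmat (w t / 2) * U * Rmat (-(w t) / 2)) ∧
    (∀ t : ℕ, 1 ≤ t →
        coinProd (fun s => Rmat k * Useq s) t =
          Rmat (w t / 2) * (Rmat (k - κ₂ / 2) * U) ^ t * Rmat (-(w 0) / 2)) ∧
    (∀ Ψhat : ℕ → Fin 2 → ℂ,
        (∀ t : ℕ, Ψhat (t + 1) = (Rmat k * Useq t).mulVec (Ψhat t)) →
        ∀ t : ℕ, 1 ≤ t →
          Ψhat t =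
            (Rmat (w t / 2) * (Rmat (k - κ₂ / 2) * U) ^ t * Rmat (-(w 0) / 2)).mulVec
              (Ψhat 0)) := by
  obtain ⟨hconj, hprod, hΨ⟩ := case2_QW_fourier_product_general a b c d U hU κ₂ w₀ w hw Useq hUseq k
  exact ⟨hconj, fun t _ => hprod t, fun Ψhat h t _ => hΨ Ψhat h t⟩
end
end

section
/- Let U = [[a,b],[c,d]] be a unitary 2×2 matrix, let κ₂ ∈ ℝ, and let w_t = κ₂ t + w₀. Consider the time-dependent quantum walk on ℤ with coin sequence U_t = [[a, b e^{i w_t}], [c e^{−i w_t}, d]] and initial state ψ₀(0) = ᵀ(α, β), ψ₀(x) = 0 for x ≠ 0. Then for every t ≥ 0 and every x ∈ ℤ, P(X_t = x) = ‖ ∫₀^{2π} e^{ikx} (R(k)U)^t ᵀ(e^{−i w₀/2} α, e^{i w₀/2} β) dk/(2π) ‖²; that is, this time-dependent walk has at every time the same position distribution as the usual (time-independent) quantum walk with coin U started from the initial state ᵀ(e^{−i w₀/2} α, e^{i w₀/2} β) at the origin. -/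
open MeasureTheory Complex Filter

noncomputable section

/-!
The Fourier integral `∫ e^{ikx} (R(k)U)^t φ dk/(2π)` solves the recurrence of the usual walk,
because multiplication by `e^{±ik}` in momentum space is the shift `x ↦ x ± 1` in position space,
and a walk is determined by its initial state. When `w_{t+1} = w_t + κ`, multiplying the two
components of `ψ_t(x)` by the phases `e^{-i(κx + w_t)/2}` and `e^{i(w_t - κx)/2}` removes
`e^{±i w_t}` from the coin: the first phase depends only on `t + x` and the second only on
`t - x`, so each is carried along by the shift of its component, while their ratio `e^{i w_t}` is
the same at all sites. Phases do not change `‖ψ_t(x)‖²`.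
-/

section InverseFourier

/-- The inverse Fourier transform of a function of the momentum `k ∈ [0, 2π]`, as a function of the
position `x ∈ ℤ`, in the convention `∫₀^{2π} e^{ikx} f(k) dk/(2π)`. It takes the momentum
representation of a walk to its amplitudes. -/
def inverseFourier (f : ℝ → ℂ) (x : ℤ) : ℂ :=
  ∫ k in (0 : ℝ)..(2 * Real.pi), exp (I * k * x) * f k / (2 * Real.pi)

theorem inverseFourier_add {f g : ℝ → ℂ} (hf : IntervalIntegrable f volume 0 (2 * Real.pi))
    (hg : IntervalIntegrable g volume 0 (2 * Real.pi)) (x : ℤ) :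
    inverseFourier (fun k => f k + g k) x = inverseFourier f x + inverseFourier g x := by
  have hexp : Continuous fun k : ℝ => exp (I * k * x) := by fun_prop
  simp only [inverseFourier, mul_add, add_div]
  exact intervalIntegral.integral_add ((hf.continuousOn_mul hexp.continuousOn).div_const _)
    ((hg.continuousOn_mul hexp.continuousOn).div_const _)

theorem inverseFourier_const_mul (z : ℂ) (f : ℝ → ℂ) (x : ℤ) :
    inverseFourier (fun k => z * f k) x = z * inverseFourier f x := by
  simp only [inverseFourier, mul_left_comm _ z, mul_div_assoc z,
    intervalIntegral.integral_const_mul]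

theorem inverseFourier_exp_mul (f : ℝ → ℂ) (n x : ℤ) :
    inverseFourier (fun k => exp (I * k * n) * f k) x = inverseFourier f (x + n) := by
  simp only [inverseFourier, ← mul_assoc, ← exp_add, Int.cast_add, mul_add]

theorem integral_exp_I_mul_int_of_ne_zero {x : ℤ} (hx : x ≠ 0) :
    ∫ k in (0 : ℝ)..(2 * Real.pi), exp (I * k * x) = 0 := by
  have hIx : I * (x : ℂ) ≠ 0 := mul_ne_zero I_ne_zero (Int.cast_ne_zero.mpr hx)
  have hperiod : exp (I * x * (2 * Real.pi : ℝ)) = 1 :=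
    exp_eq_one_iff.mpr ⟨x, by push_cast; ring⟩
  simp only [mul_right_comm I _ (x : ℂ), integral_exp_mul_complex hIx, hperiod, ofReal_zero,
    mul_zero, exp_zero, sub_self, zero_div]

theorem inverseFourier_const (z : ℂ) (x : ℤ) :
    inverseFourier (fun _ => z) x = if x = 0 then z else 0 := by
  simp only [inverseFourier, intervalIntegral.integral_div, intervalIntegral.integral_mul_const]
  split_ifs with hx
  · have hpi : (Real.pi : ℂ) ≠ 0 := ofReal_ne_zero.mpr Real.pi_ne_zero
    simp [hx, hpi]
  · rw [integral_exp_I_mul_int_of_ne_zero hx, zero_mul, zero_div]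

end InverseFourier

section Walk

open scoped Matrix

theorem qwInit_iff {α β : ℂ} {ψ : ℕ → ℤ → Fin 2 → ℂ} :
    QWInit α β ψ ↔ ∀ x, ψ 0 x = if x = 0 then ![α, β] else 0 := by
  constructor
  · rintro ⟨hα, hβ, hne⟩ x
    ext j
    split_ifs with hx
    · subst hx
      fin_cases j <;> simp [hα, hβ]
    · fin_cases j <;> simp [hne x hx]
  · intro h
    exact ⟨by simp [h], by simp [h], fun x hx => by simp [h, hx]⟩

theorem QWEvolves.eq_of_initial_eq {U : ℕ → Matrix (Fin 2) (Fin 2) ℂ} {ψ χ : ℕ → ℤ → Fin 2 → ℂ}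
    (hψ : QWEvolves U ψ) (hχ : QWEvolves U χ) (h0 : ψ 0 = χ 0) : ψ = χ := by
  ext1 t
  induction t with
  | zero => exact h0
  | succ t ih =>
    ext x j
    fin_cases j
    · simp [(hψ t x).1, (hχ t x).1, ih]
    · simp [(hψ t x).2, (hχ t x).2, ih]

theorem QWEvolves.mul_left {U V : ℕ → Matrix (Fin 2) (Fin 2) ℂ} {g ψ : ℕ → ℤ → Fin 2 → ℂ}
    (hψ : QWEvolves U ψ) (h0 : ∀ t x j, g (t + 1) x 0 * U t 0 j = V t 0 j * g t (x + 1) j)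
    (h1 : ∀ t x j, g (t + 1) x 1 * U t 1 j = V t 1 j * g t (x - 1) j) :
    QWEvolves V (g * ψ) := by
  intro t x
  obtain ⟨hψ0, hψ1⟩ := hψ t x
  simp only [Pi.mul_apply, hψ0, hψ1, mul_add, ← mul_assoc, h0, h1, and_self]

theorem qwProb_mul_of_norm_eq_one {g : ℕ → ℤ → Fin 2 → ℂ} {t : ℕ} {x : ℤ}
    (hg : ∀ j, ‖g t x j‖ = 1) (ψ : ℕ → ℤ → Fin 2 → ℂ) : qwProb (g * ψ) t x = qwProb ψ t x := by
  simp only [qwProb, Pi.mul_apply, normSq_eq_norm_sq, norm_mul, hg, one_mul]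

theorem Rmat_mulVec (k : ℝ) (v : Fin 2 → ℂ) :
    Rmat k *ᵥ v = ![exp (I * k) * v 0, exp (-(I * k)) * v 1] := by
  ext j
  fin_cases j <;> simp [Rmat, Matrix.mulVec, dotProduct]

theorem continuous_Rmat : Continuous Rmat := by
  refine continuous_matrix fun i j => ?_
  have hexp : Continuous fun k : ℝ => exp (I * k) := by fun_prop
  have hexp_neg : Continuous fun k : ℝ => exp (-(I * k)) := by fun_prop
  fin_cases i <;> fin_cases j
  exacts [hexp, continuous_const, continuous_const, hexp_neg]

theorem qwEvolves_inverseFourier {U : ℕ → Matrix (Fin 2) (Fin 2) ℂ} {Ψ : ℕ → ℝ → Fin 2 → ℂ}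
    (hint : ∀ t j, IntervalIntegrable (fun k => Ψ t k j) volume 0 (2 * Real.pi))
    (hΨ : ∀ t k, Ψ (t + 1) k = Rmat k *ᵥ (U t *ᵥ Ψ t k)) :
    QWEvolves U fun t x j => inverseFourier (fun k => Ψ t k j) x := by
  intro t x
  have hcoin (i : Fin 2) (y : ℤ) : inverseFourier (fun k => (U t *ᵥ Ψ t k) i) y =
      U t i 0 * inverseFourier (fun k => Ψ t k 0) y +
        U t i 1 * inverseFourier (fun k => Ψ t k 1) y := by
    simp only [Matrix.mulVec, dotProduct, Fin.sum_univ_two]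
    rw [inverseFourier_add ((hint t 0).const_mul _) ((hint t 1).const_mul _),
      inverseFourier_const_mul, inverseFourier_const_mul]
  constructor
  · rw [← hcoin, ← inverseFourier_exp_mul _ 1 x]
    simp only [hΨ, Rmat_mulVec]
    simp
  · rw [← hcoin, sub_eq_add_neg, ← inverseFourier_exp_mul _ (-1) x]
    simp only [hΨ, Rmat_mulVec]
    simp

/-- The amplitudes `∫₀^{2π} e^{ikx} (R(k)U)^t φ dk/(2π)` of the usual walk with coin `U` started
from `φ` at the origin. -/
def usualAmplitude (U : Matrix (Fin 2) (Fin 2) ℂ) (φ : Fin 2 → ℂ) (t : ℕ) (x : ℤ) (j : Fin 2) :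
    ℂ :=
  inverseFourier (fun k => ((Rmat k * U) ^ t *ᵥ φ) j) x

theorem usualAmplitude_zero (U : Matrix (Fin 2) (Fin 2) ℂ) (φ : Fin 2 → ℂ) (x : ℤ) :
    usualAmplitude U φ 0 x = if x = 0 then φ else 0 := by
  ext j
  simp only [usualAmplitude, pow_zero, Matrix.one_mulVec, inverseFourier_const]
  split_ifs <;> rfl

theorem qwEvolves_usualAmplitude (U : Matrix (Fin 2) (Fin 2) ℂ) (φ : Fin 2 → ℂ) :
    QWEvolves (fun _ => U) (usualAmplitude U φ) := by
  refine qwEvolves_inverseFourier (fun t j => Continuous.intervalIntegrable ?_ _ _) fun t k => ?_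
  · exact (continuous_apply j).comp
      (((continuous_Rmat.matrix_mul continuous_const).pow t).matrix_mulVec continuous_const)
  · rw [pow_succ', ← Matrix.mulVec_mulVec, ← Matrix.mulVec_mulVec]

theorem QWEvolves.eq_usualAmplitude {U : Matrix (Fin 2) (Fin 2) ℂ} {φ : Fin 2 → ℂ}
    {ψ : ℕ → ℤ → Fin 2 → ℂ} (hψ : QWEvolves (fun _ => U) ψ)
    (h0 : ∀ x, ψ 0 x = if x = 0 then φ else 0) : ψ = usualAmplitude U φ :=
  hψ.eq_of_initial_eq (qwEvolves_usualAmplitude U φ) <| funext fun x => by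
    rw [h0, usualAmplitude_zero]

end Walk

section Gauge

variable {κ : ℝ} {w : ℕ → ℝ}

/-- The phases `e^{-i(κx + w_t)/2}` and `e^{i(w_t - κx)/2}` by which the components of `ψ_t(x)` are
multiplied in order to remove the phase `w_t` from the coin. -/
def phaseGauge (κ : ℝ) (w : ℕ → ℝ) (t : ℕ) (x : ℤ) : Fin 2 → ℂ :=
  ![exp (I * (-(κ * x + w t) / 2 : ℝ)), exp (I * ((w t - κ * x) / 2 : ℝ))]

theorem norm_phaseGauge (κ : ℝ) (w : ℕ → ℝ) (t : ℕ) (x : ℤ) (j : Fin 2) :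
    ‖phaseGauge κ w t x j‖ = 1 := by
  fin_cases j <;> exact norm_exp_I_mul_ofReal _

theorem phaseGauge_origin (κ : ℝ) (w : ℕ → ℝ) :
    phaseGauge κ w 0 0 = ![exp (-(I * (w 0 / 2))), exp (I * (w 0 / 2))] := by
  simp [phaseGauge, neg_div]

theorem phaseGauge_succ_zero (hw : ∀ t, w (t + 1) = w t + κ) (t : ℕ) (x : ℤ) :
    phaseGauge κ w (t + 1) x 0 = phaseGauge κ w t (x + 1) 0 := by
  simp only [phaseGauge, hw, Matrix.cons_val_zero]
  congr 3
  push_cast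
  ring

theorem phaseGauge_succ_one (hw : ∀ t, w (t + 1) = w t + κ) (t : ℕ) (x : ℤ) :
    phaseGauge κ w (t + 1) x 1 = phaseGauge κ w t (x - 1) 1 := by
  simp only [phaseGauge, hw, Matrix.cons_val_one, Matrix.cons_val_fin_one]
  congr 3
  push_cast
  ring

theorem phaseGauge_zero_mul_exp (κ : ℝ) (w : ℕ → ℝ) (t : ℕ) (x : ℤ) :
    phaseGauge κ w t x 0 * exp (I * w t) = phaseGauge κ w t x 1 := by
  simp only [phaseGauge, Matrix.cons_val_zero, Matrix.cons_val_one, Matrix.cons_val_fin_one,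
    ← exp_add]
  congr 1
  push_cast
  ring

theorem phaseGauge_one_mul_exp_neg (κ : ℝ) (w : ℕ → ℝ) (t : ℕ) (x : ℤ) :
    phaseGauge κ w t x 1 * exp (-(I * w t)) = phaseGauge κ w t x 0 := by
  rw [← phaseGauge_zero_mul_exp, mul_assoc, ← exp_add, add_neg_cancel, exp_zero, mul_one]

theorem QWEvolves.phaseGauge_mul {a b c d : ℂ} {ψ : ℕ → ℤ → Fin 2 → ℂ}
    (hw : ∀ t, w (t + 1) = w t + κ)
    (hψ : QWEvolves (fun t => !![a, b * exp (I * w t); c * exp (-(I * w t)), d]) ψ) :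
    QWEvolves (fun _ => !![a, b; c, d]) (phaseGauge κ w * ψ) := by
  refine hψ.mul_left (fun t x j => ?_) fun t x j => ?_
  · rw [phaseGauge_succ_zero hw]
    fin_cases j
    · simp [mul_comm]
    · simp [← phaseGauge_zero_mul_exp, mul_left_comm]
  · rw [phaseGauge_succ_one hw]
    fin_cases j
    · simp [← phaseGauge_one_mul_exp_neg, mul_left_comm]
    · simp [mul_comm]

theorem QWInit.phaseGauge_mul {α β : ℂ} {ψ : ℕ → ℤ → Fin 2 → ℂ} (hψ : QWInit α β ψ)
    (κ : ℝ) (w : ℕ → ℝ) :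
    QWInit (exp (-(I * (w 0 / 2))) * α) (exp (I * (w 0 / 2)) * β) (phaseGauge κ w * ψ) := by
  obtain ⟨hα, hβ, hne⟩ := hψ
  refine ⟨?_, ?_, fun x hx => ?_⟩
  · simp [phaseGauge_origin, hα]
  · simp [phaseGauge_origin, hβ]
  · simp [hne x hx]

end Gauge

theorem case2_QW_equals_usual_walk_general {a b c d : ℂ} {κ : ℝ} {w : ℕ → ℝ}
    (hw : ∀ t, w (t + 1) = w t + κ) {α β : ℂ} {ψ : ℕ → ℤ → Fin 2 → ℂ} (hinit : QWInit α β ψ)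
    (hevol : QWEvolves (fun t => !![a, b * exp (I * w t); c * exp (-(I * w t)), d]) ψ)
    (t : ℕ) (x : ℤ) :
    qwProb ψ t x = qwProb (usualAmplitude !![a, b; c, d]
      ![exp (-(I * (w 0 / 2))) * α, exp (I * (w 0 / 2)) * β]) t x := by
  have hgauge := (hevol.phaseGauge_mul hw).eq_usualAmplitude
    (qwInit_iff.mp (hinit.phaseGauge_mul κ w))
  rw [← hgauge, qwProb_mul_of_norm_eq_one (norm_phaseGauge κ w t x)]

/-- Case 2 reduces to the usual walk: the position distribution of the walk with coin
`U_t = [[a, b e^{iw_t}], [c e^{-iw_t}, d]]`, `w_t = κ₂ t + w₀`, coincides at every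
time with that of the usual walk with coin `U` and initial state
`ᵀ(e^{-iw₀/2} α, e^{iw₀/2} β)` at the origin. -/
theorem case2_QW_equals_usual_walk
    (a b c d : ℂ) (U : Matrix (Fin 2) (Fin 2) ℂ) (hU : U = !![a, b; c, d])
    (hunit : Matrix.conjTranspose U * U = 1)
    (κ₂ w₀ : ℝ) (w : ℕ → ℝ) (hw : ∀ t : ℕ, w t = κ₂ * t + w₀)
    (α β : ℂ) (hαβ : Complex.normSq α + Complex.normSq β = 1)
    (ψ : ℕ → ℤ → Fin 2 → ℂ)
    (hinit : QWInit α β ψ)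
    (hevol : QWEvolves
      (fun t => !![a, b * Complex.exp (Complex.I * (w t));
                   c * Complex.exp (-(Complex.I * (w t))), d]) ψ) :
    ∀ t : ℕ, ∀ x : ℤ,
      qwProb ψ t x =
        Complex.normSq (∫ k in (0:ℝ)..(2 * Real.pi),
          Complex.exp (Complex.I * k * x) *
            (((Rmat k * U) ^ t).mulVec
              ![Complex.exp (-(Complex.I * (w 0 / 2))) * α,
                Complex.exp (Complex.I * (w 0 / 2)) * β] 0) / (2 * Real.pi)) +
        Complex.normSq (∫ k in (0:ℝ)..(2 * Real.pi),
          Complex.exp (Complex.I * k * x) *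
            (((Rmat k * U) ^ t).mulVec
              ![Complex.exp (-(Complex.I * (w 0 / 2))) * α,
                Complex.exp (Complex.I * (w 0 / 2)) * β] 1) / (2 * Real.pi)) := by
  subst hU
  exact case2_QW_equals_usual_walk_general (fun t => by rw [hw, hw]; push_cast; ring) hinit hevol
end
end
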